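/- arXiv:1312.1113 — 2 statements merged into one kernel-verified Lean document; each statement's English description precedes it below -/
import Mathlib

section
/- Hardy's uncertainty principle on ℝ: if f : ℝ → ℂ is a nontrivial measurable function satisfying |f(x)| ≤ C e^{-a x²} and |f̂(y)| ≤ C e^{-b y²} for all x, y ∈ ℝ, with a, b > 0, then a·b ≤ 1/4. -/
open MeasureTheory Real Complex

/-- An integrable function on `ℝ` whose Fourier transform vanishes is zero almost everywhere. -/
theorem ae_eq_zero_of_fourier_eq_zero {f : ℝ → ℂ} (hf : Integrable f)
    (h : ∀ w, FourierTransform.fourier f w = 0) : f =ᵐ[volume] 0 := by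
  refine ae_eq_zero_of_integral_contDiff_smul_eq_zero hf.locallyIntegrable fun g hg hgc => ?_
  have hgc' : HasCompactSupport (fun x => (g x : ℂ)) := hgc.comp_left Complex.ofReal_zero
  let φ : SchwartzMap ℝ ℂ := hgc'.toSchwartzMap (Complex.ofRealCLM.contDiff.comp hg)
  let ψ : SchwartzMap ℝ ℂ := FourierTransformInv.fourierInv φ
  have hψ : FourierTransform.fourier (ψ : ℝ → ℂ) = φ := by
    rw [← SchwartzMap.fourier_coe]
    exact congrArg _ (FourierTransform.fourier_fourierInv_eq φ)
  have key := VectorFourier.integral_fourierIntegral_smul_eq_flip (L := innerₗ ℝ)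
    Real.continuous_fourierChar continuous_inner hf (ψ.integrable (μ := volume))
  have h0 : ∀ w, VectorFourier.fourierIntegral Real.fourierChar volume (innerₗ ℝ) f w = 0 := h
  have h1 : ∀ x, VectorFourier.fourierIntegral Real.fourierChar volume (innerₗ ℝ).flip ψ x = g x := by
    intro x
    rw [flip_innerₗ]
    exact congrFun hψ x
  simp only [h0, h1, zero_smul, integral_zero] at key
  rw [key]
  simp [mul_comm]

/-- A Phragmén–Lindelöf principle: an entire function bounded by `M` on the real axis and by
`M * exp (b * x ^ 2 - d * y ^ 2)` at `x + i y` is bounded by `M` everywhere. -/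
theorem norm_le_of_norm_le_exp_sub {G : ℂ → ℂ} (hG : Differentiable ℂ G) {M b d : ℝ}
    (hb : 0 < b) (hd : 0 < d) (hreal : ∀ x : ℝ, ‖G x‖ ≤ M)
    (hbd : ∀ z : ℂ, ‖G z‖ ≤ M * Real.exp (b * z.re ^ 2 - d * z.im ^ 2)) (z : ℂ) : ‖G z‖ ≤ M := by
  have hM : 0 ≤ M := (norm_nonneg _).trans (hreal 0)
  have houter : ∀ w : ℂ, b * w.re ^ 2 ≤ d * w.im ^ 2 → ‖G w‖ ≤ M := fun w hw =>
    (hbd w).trans (mul_le_of_le_one_right hM (Real.exp_le_one_iff.2 (by linarith)))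
  wlog hre : 0 ≤ z.re generalizing G z
  · have := this (G := fun w => G (-w)) (hG.comp differentiable_neg)
      (fun x => by simpa using hreal (-x)) (fun w => by simpa using hbd (-w))
      (-z) (fun w hw => houter (-w) (by simpa using hw)) (by simp; linarith)
    simpa using this
  rcases le_or_gt (b * z.re ^ 2) (d * z.im ^ 2) with hz | hz
  · exact houter z hz
  have hre' : 0 < z.re := by
    rcases hre.lt_or_eq with h | h
    · exact h
    · rw [← h] at hz
      nlinarith [sq_nonneg z.im]
  set K := √(b / d) with hK
  have hK0 : 0 < K := Real.sqrt_pos.2 (div_pos hb hd)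
  have hK2 : d * K ^ 2 = b := by
    rw [hK, Real.sq_sqrt (div_pos hb hd).le]
    field_simp
  set θ := Real.arctan K with hθ
  have hθ0 : 0 < θ := Real.arctan_pos.2 hK0
  have hθ2 : θ < π / 2 := Real.arctan_lt_pi_div_two K
  have hquot : |z.im / z.re| ≤ K := by
    rw [abs_div, abs_of_pos hre', div_le_iff₀ hre']
    refine abs_le_of_sq_le_sq ?_ (by positivity)
    rw [mul_pow]
    refine le_of_mul_le_mul_left (a := d) ?_ hd
    rw [← mul_assoc, hK2]
    exact hz.le
  have hargabs := Complex.abs_arg_lt_pi_div_two_iff.2 (Or.inl hre')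
  have harg : z.arg = Real.arctan (z.im / z.re) := by
    rw [← Complex.tan_arg, Real.arctan_tan (abs_lt.1 hargabs).1 (abs_lt.1 hargabs).2]
  have hz0 : z ≠ 0 := fun h => by simp [h] at hre'
  have hre_exp : ∀ ζ : ℂ, (Complex.exp ζ).re = Real.exp ζ.re * Real.cos ζ.im := Complex.exp_re
  have him_exp : ∀ ζ : ℂ, (Complex.exp ζ).im = Real.exp ζ.re * Real.sin ζ.im := Complex.exp_im
  have hsin : Real.sin θ = K * Real.cos θ := by
    rw [← Real.tan_mul_cos (Real.cos_arctan_pos K).ne', hθ, Real.tan_arctan]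
  have hline0 : ∀ ζ : ℂ, ζ.im = 0 → ‖G (Complex.exp ζ)‖ ≤ M := fun ζ hζ => by
    have : Complex.exp ζ = (Real.exp ζ.re : ℝ) := by
      apply Complex.ext
      · rw [hre_exp, hζ, Complex.ofReal_re]; simp
      · rw [him_exp, hζ]; simp
    rw [this]
    exact hreal _
  have hlineθ : ∀ ζ : ℂ, |ζ.im| = θ → ‖G (Complex.exp ζ)‖ ≤ M := fun ζ hζ => by
    have hc : Real.cos ζ.im = Real.cos θ := by rw [← hζ, Real.cos_abs]
    have hs : Real.sin ζ.im ^ 2 = Real.sin θ ^ 2 := by rw [Real.sin_sq, Real.sin_sq, hc]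
    refine houter _ (le_of_eq ?_)
    rw [hre_exp, him_exp, mul_pow, mul_pow, hs, hc, hsin, mul_pow, ← hK2]
    ring
  have hgrowth : ∀ l : Filter ℂ, (fun ζ => G (Complex.exp ζ)) =O[l]
      fun ζ => Real.exp (b * Real.exp (2 * |ζ.re|)) := fun l => by
    refine Asymptotics.IsBigO.of_bound M (Filter.Eventually.of_forall fun ζ => ?_)
    refine (hbd _).trans ?_
    rw [Real.norm_of_nonneg (Real.exp_pos _).le]
    gcongr
    have h1 : (Complex.exp ζ).re ^ 2 ≤ Real.exp (2 * |ζ.re|) := by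
      calc (Complex.exp ζ).re ^ 2 ≤ ‖Complex.exp ζ‖ ^ 2 :=
            sq_le_sq' (by linarith [(abs_le.1 (Complex.abs_re_le_norm (Complex.exp ζ))).1])
              (Complex.re_le_norm _)
        _ = Real.exp (2 * ζ.re) := by
            rw [Complex.norm_exp, ← Real.exp_nat_mul]; norm_num
        _ ≤ _ := by gcongr; exact le_abs_self _
    have := mul_le_mul_of_nonneg_left h1 hb.le
    nlinarith [mul_nonneg hd.le (sq_nonneg (Complex.exp ζ).im)]
  have hslope : 2 < π / θ := by rw [lt_div_iff₀ hθ0]; linarith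
  have hdiff : Differentiable ℂ fun ζ => G (Complex.exp ζ) := hG.comp Complex.differentiable_exp
  have hargle : |z.arg| ≤ θ := by
    rw [harg, abs_le, hθ, ← Real.arctan_neg, Real.arctan_le_arctan_iff, Real.arctan_le_arctan_iff]
    exact abs_le.1 hquot
  have hlog : ‖G z‖ = ‖(fun ζ => G (Complex.exp ζ)) (Complex.log z)‖ := by
    simp only [Complex.exp_log hz0]
  rw [hlog]
  rcases le_total 0 z.arg with h | h
  · refine PhragmenLindelof.horizontal_strip (f := fun ζ => G (Complex.exp ζ)) (a := 0) (b := θ)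
      hdiff.diffContOnCl
      ⟨2, by rwa [sub_zero], b, hgrowth _⟩ hline0
      (fun ζ hζ => hlineθ ζ (by rw [hζ, abs_of_pos hθ0])) ?_ ?_
    · rwa [Complex.log_im]
    · rw [Complex.log_im]; exact (abs_le.1 hargle).2
  · refine PhragmenLindelof.horizontal_strip (f := fun ζ => G (Complex.exp ζ)) (a := -θ) (b := 0)
      hdiff.diffContOnCl
      ⟨2, by rwa [zero_sub, neg_neg], b, hgrowth _⟩
      (fun ζ hζ => hlineθ ζ (by rw [hζ, abs_neg, abs_of_pos hθ0])) hline0 ?_ ?_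
    · rw [Complex.log_im]; exact (abs_le.1 hargle).1
    · rwa [Complex.log_im]

theorem norm_cexp_neg_I_mul (x : ℝ) (z : ℂ) :
    ‖Complex.exp (-Complex.I * x * z)‖ = Real.exp (x * z.im) := by
  rw [Complex.norm_exp]
  simp

theorem mul_le_mul_sq_add_sq_div {p : ℝ} (hp : 0 < p) (x v : ℝ) :
    x * v ≤ p * x ^ 2 + v ^ 2 / (4 * p) := by
  have : p * x ^ 2 + v ^ 2 / (4 * p) - x * v = (2 * p * x - v) ^ 2 / (4 * p) := by
    field_simp
    ring
  have : 0 ≤ (2 * p * x - v) ^ 2 / (4 * p) := by positivity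
  linarith

section Gaussian

variable {f : ℝ → ℂ} {a C : ℝ}

theorem norm_mul_cexp_le (hC : 0 < C)
    (hdecay : ∀ x : ℝ, ‖f x‖ ≤ C * Real.exp (-a * x ^ 2)) {p : ℝ} (hp : 0 < p) (x : ℝ) (z : ℂ) :
    ‖f x * Complex.exp (-Complex.I * x * z)‖ ≤
      C * Real.exp (z.im ^ 2 / (4 * p)) * Real.exp (-(a - p) * x ^ 2) := by
  rw [norm_mul, norm_cexp_neg_I_mul, mul_assoc, ← Real.exp_add]
  calc ‖f x‖ * Real.exp (x * z.im)
      ≤ C * Real.exp (-a * x ^ 2) * Real.exp (p * x ^ 2 + z.im ^ 2 / (4 * p)) := by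
        gcongr
        · exact hdecay x
        · exact mul_le_mul_sq_add_sq_div hp x z.im
    _ = _ := by
        rw [mul_assoc, ← Real.exp_add]
        ring_nf

theorem integrable_mul_cexp (hf : Measurable f) (ha : 0 < a) (hC : 0 < C)
    (hdecay : ∀ x : ℝ, ‖f x‖ ≤ C * Real.exp (-a * x ^ 2)) (z : ℂ) :
    Integrable fun x : ℝ => f x * Complex.exp (-Complex.I * x * z) := by
  refine ((integrable_exp_neg_mul_sq (b := a - a / 2) (by linarith)).const_mul
    (C * Real.exp (z.im ^ 2 / (4 * (a / 2))))).mono' ?_ (Filter.Eventually.of_forall fun x => ?_)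
  · exact (hf.mul (by fun_prop)).aestronglyMeasurable
  · exact norm_mul_cexp_le hC hdecay (half_pos ha) x z

theorem norm_integral_mul_cexp_le (hC : 0 < C)
    (hdecay : ∀ x : ℝ, ‖f x‖ ≤ C * Real.exp (-a * x ^ 2)) {p : ℝ} (hp : 0 < p) (hpa : p < a)
    (z : ℂ) :
    ‖∫ x : ℝ, f x * Complex.exp (-Complex.I * x * z)‖ ≤
      (C * ∫ x : ℝ, Real.exp (-(a - p) * x ^ 2)) * Real.exp (z.im ^ 2 / (4 * p)) := by
  refine (norm_integral_le_of_norm_le ((integrable_exp_neg_mul_sq (b := a - p)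
    (by linarith)).const_mul _) (Filter.Eventually.of_forall fun x =>
      norm_mul_cexp_le hC hdecay hp x z)).trans (le_of_eq ?_)
  rw [integral_const_mul]
  ring

/-- The Fourier–Laplace integral of a function with Gaussian decay is entire. -/
theorem differentiable_integral_mul_cexp (hf : Measurable f) (ha : 0 < a) (hC : 0 < C)
    (hdecay : ∀ x : ℝ, ‖f x‖ ≤ C * Real.exp (-a * x ^ 2)) :
    Differentiable ℂ fun z : ℂ => ∫ x : ℝ, f x * Complex.exp (-Complex.I * x * z) := by
  intro z₀
  set R := |z₀.im| + 2
  refine HasDerivAt.differentiableAt (And.right (hasDerivAt_integral_of_dominated_loc_of_deriv_le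
    (F := fun (z : ℂ) (x : ℝ) => f x * Complex.exp (-Complex.I * x * z))
    (F' := fun (z : ℂ) (x : ℝ) => f x * (Complex.exp (-Complex.I * x * z) * (-Complex.I * x)))
    (bound := fun x => C * Real.exp (R ^ 2 / (4 * (a / 2))) * Real.exp (-(a - a / 2) * x ^ 2))
    (Metric.ball_mem_nhds z₀ one_pos) (Filter.Eventually.of_forall fun z => ?_)
    (integrable_mul_cexp hf ha hC hdecay z₀) ?_ (Filter.Eventually.of_forall fun x z hz => ?_)
    ((integrable_exp_neg_mul_sq (by linarith)).const_mul _)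
    (Filter.Eventually.of_forall fun x z _ => ?_)))
  · exact (integrable_mul_cexp hf ha hC hdecay z).aestronglyMeasurable
  · exact (hf.mul (by fun_prop)).aestronglyMeasurable
  · have him : |z.im| ≤ |z₀.im| + 1 := by
      have h1 := (Complex.abs_im_le_norm (z - z₀)).trans (mem_ball_iff_norm.1 hz).le
      rw [Complex.sub_im] at h1
      linarith [abs_sub_abs_le_abs_sub z.im z₀.im]
    have hx : |x| ≤ Real.exp |x| := by linarith [Real.add_one_le_exp |x|]
    have hxz : x * z.im ≤ |x| * (|z₀.im| + 1) :=
      (le_abs_self _).trans (by rw [abs_mul]; gcongr)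
    rw [norm_mul, norm_mul, norm_cexp_neg_I_mul]
    have hn : ‖-Complex.I * (x : ℂ)‖ = |x| := by simp
    rw [hn, mul_assoc, ← Real.exp_add]
    calc ‖f x‖ * (Real.exp (x * z.im) * |x|)
        ≤ C * Real.exp (-a * x ^ 2) * (Real.exp (|x| * (|z₀.im| + 1)) * Real.exp |x|) := by
          gcongr
          exact hdecay x
      _ = C * Real.exp (-a * x ^ 2 + |x| * R) := by
          rw [← Real.exp_add, mul_assoc, ← Real.exp_add]
          simp only [R]
          ring_nf
      _ ≤ _ := by
          refine mul_le_mul_of_nonneg_left (Real.exp_le_exp.2 ?_) hC.le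
          have := mul_le_mul_sq_add_sq_div (half_pos ha) |x| R
          rw [sq_abs] at this
          linarith
  · have h1 : HasDerivAt (fun z : ℂ => -Complex.I * x * z) (-Complex.I * x) z := by
      simpa using (hasDerivAt_id z).const_mul (-Complex.I * (x : ℂ))
    exact h1.cexp.const_mul (f x)

end Gaussian

/-- Hardy's uncertainty principle on ℝ: if a nontrivial measurable `f` satisfies
`|f(x)| ≤ C e^{-ax²}` and `|f̂(y)| ≤ C e^{-by²}` with `a, b > 0`, then `ab ≤ 1/4`. -/
theorem hardy_uncertainty (f : ℝ → ℂ) (hf : Measurable f)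
    (hne : ¬ f =ᵐ[volume] 0)
    (a b C : ℝ) (ha : 0 < a) (hb : 0 < b) (hC : 0 < C)
    (hdecay : ∀ x : ℝ, ‖f x‖ ≤ C * Real.exp (-a * x ^ 2))
    (hhat : ∀ y : ℝ,
      ‖(((2 * π) ^ (-(1 : ℝ) / 2) : ℝ) : ℂ) *
        ∫ x : ℝ, f x * Complex.exp (-Complex.I * x * y)‖ ≤ C * Real.exp (-b * y ^ 2)) :
    a * b ≤ 1 / 4 := by
  by_contra! hab
  apply hne
  set F : ℂ → ℂ := fun z => ∫ x : ℝ, f x * Complex.exp (-Complex.I * x * z)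
  have hFd : Differentiable ℂ F := differentiable_integral_mul_cexp hf ha hC hdecay
  obtain ⟨p, hp1, hpa⟩ : ∃ p, 1 / (4 * b) < p ∧ p < a :=
    exists_between (by rw [div_lt_iff₀ (by positivity)]; linarith)
  have hp : 0 < p := lt_trans (by positivity) hp1
  have hd : 0 < b - 1 / (4 * p) := by
    rw [div_lt_iff₀ (by positivity)] at hp1
    rw [sub_pos, div_lt_iff₀ (by positivity)]
    linarith
  set κ : ℝ := (2 * π) ^ (-(1 : ℝ) / 2)
  have hκ : 0 < κ := by positivity
  set J : ℝ := C * ∫ x : ℝ, Real.exp (-(a - p) * x ^ 2)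
  set M := max J (C / κ)
  set G : ℂ → ℂ := fun z => F z * Complex.exp (b * z ^ 2) with hGdef
  have hGd : Differentiable ℂ G := hFd.mul (by fun_prop)
  have hnorm : ∀ z : ℂ, ‖Complex.exp (b * z ^ 2)‖ = Real.exp (b * (z.re ^ 2 - z.im ^ 2)) := by
    intro z
    rw [Complex.norm_exp, Complex.re_ofReal_mul, sq, Complex.mul_re]
    ring_nf
  have hreal : ∀ x : ℝ, ‖G x‖ ≤ M := fun x => by
    refine le_trans ?_ (le_max_right _ _)
    have h := hhat x
    rw [norm_mul, Complex.norm_real, Real.norm_of_nonneg hκ.le] at h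
    rw [hGdef, le_div_iff₀ hκ]
    simp only [norm_mul, hnorm, Complex.ofReal_re, Complex.ofReal_im]
    calc ‖F x‖ * Real.exp (b * (x ^ 2 - 0 ^ 2)) * κ
        = κ * ‖F x‖ * Real.exp (b * x ^ 2) := by ring_nf
      _ ≤ C * Real.exp (-b * x ^ 2) * Real.exp (b * x ^ 2) := by gcongr
      _ = C := by rw [mul_assoc, ← Real.exp_add]; simp
  have hbd : ∀ z : ℂ, ‖G z‖ ≤ M * Real.exp (b * z.re ^ 2 - (b - 1 / (4 * p)) * z.im ^ 2) :=
    fun z => by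
      simp only [hGdef, norm_mul, hnorm]
      calc ‖F z‖ * Real.exp (b * (z.re ^ 2 - z.im ^ 2))
          ≤ J * Real.exp (z.im ^ 2 / (4 * p)) * Real.exp (b * (z.re ^ 2 - z.im ^ 2)) := by
            gcongr
            exact norm_integral_mul_cexp_le hC hdecay hp hpa z
        _ = J * Real.exp (b * z.re ^ 2 - (b - 1 / (4 * p)) * z.im ^ 2) := by
            rw [mul_assoc, ← Real.exp_add]
            ring_nf
        _ ≤ _ := by
            gcongr
            exact le_max_left _ _
  have hbounded : Bornology.IsBounded (Set.range G) :=
    isBounded_iff_forall_norm_le.2 ⟨M, by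
      rintro _ ⟨z, rfl⟩
      exact norm_le_of_norm_le_exp_sub hGd hb hd hreal hbd z⟩
  have hG0 : ∀ z, G z = 0 := fun z => by
    have hlim : Filter.Tendsto
        (fun t : ℝ => M * Real.exp (-((b - 1 / (4 * p)) * t ^ 2))) Filter.atTop (nhds (M * 0)) :=
      (Real.tendsto_exp_neg_atTop_nhds_zero.comp
        ((Filter.tendsto_pow_atTop two_ne_zero).const_mul_atTop hd)).const_mul M
    rw [mul_zero] at hlim
    refine norm_le_zero_iff.1 (ge_of_tendsto' hlim fun t => ?_)
    rw [hGd.apply_eq_apply_of_bounded hbounded z (t * Complex.I)]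
    simpa using hbd (t * Complex.I)
  have hF0 : ∀ z, F z = 0 := fun z =>
    (mul_eq_zero.1 (hG0 z)).resolve_right (Complex.exp_ne_zero _)
  have hfi : Integrable f := by simpa using integrable_mul_cexp hf ha hC hdecay 0
  refine ae_eq_zero_of_fourier_eq_zero hfi fun w => ?_
  rw [Real.fourier_real_eq_integral_exp_smul, ← hF0 (2 * π * w)]
  refine integral_congr_ae (Filter.Eventually.of_forall fun x => ?_)
  simp only [smul_eq_mul]
  rw [mul_comm]
  congr 2
  push_cast
  ring
end

section
/- If g is a Schwartz function on ℝⁿ and f = g * p_a (a > 0), then f extends to an entire function on ℂⁿ and for every nonnegative integer m there is C_m with |f(x+iy)|² ≤ C_m (1+|x|²+|y|²)^{-m} (8πa)^{-n/2} e^{|y|²/(2a)} for all x, y ∈ ℝⁿ. -/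
open MeasureTheory Real Complex

section ComplexGaussian

variable {n : ℕ} {a : ℝ}

/-- The Gaussian `w ↦ exp (-(∑ wⱼ²) / (4a))` on `ℂⁿ`. -/
noncomputable def complexGaussian (a : ℝ) (w : Fin n → ℂ) : ℂ :=
  Complex.exp (-(∑ j, w j ^ 2) / (4 * (a : ℂ)))

/-- The derivative of `complexGaussian`. -/
noncomputable def complexGaussianDeriv (a : ℝ) (w : Fin n → ℂ) : (Fin n → ℂ) →L[ℂ] ℂ :=
  (-(complexGaussian a w) / (2 * (a : ℂ))) •
    ∑ j, w j • (ContinuousLinearMap.proj j : (Fin n → ℂ) →L[ℂ] ℂ)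

/-- The coordinatewise inclusion `ℝⁿ → ℂⁿ`. -/
noncomputable def realToComplexPi (n : ℕ) : (Fin n → ℝ) →L[ℝ] (Fin n → ℂ) :=
  ContinuousLinearMap.pi fun j => Complex.ofRealCLM.comp (ContinuousLinearMap.proj j)

@[simp]
lemma realToComplexPi_apply (u : Fin n → ℝ) (j : Fin n) : realToComplexPi n u j = (u j : ℂ) := rfl

lemma norm_realToComplexPi (u : Fin n → ℝ) : ‖realToComplexPi n u‖ = ‖u‖ := by
  simp [Pi.norm_def, nnnorm]

lemma hasFDerivAt_complexGaussian (w : Fin n → ℂ) :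
    HasFDerivAt (complexGaussian a) (complexGaussianDeriv a w) w := by
  have hsum : HasFDerivAt (fun w : Fin n → ℂ => ∑ j, w j ^ 2)
      (∑ j, (2 * w j) • (ContinuousLinearMap.proj j : (Fin n → ℂ) →L[ℂ] ℂ)) w := by
    refine HasFDerivAt.fun_sum fun j _ => ?_
    simpa using (hasFDerivAt_apply (𝕜 := ℂ) j w).pow 2
  have h := (hsum.neg.mul_const ((4 * (a : ℂ))⁻¹)).cexp
  refine h.congr_fderiv ?_
  ext v
  simp only [complexGaussianDeriv, complexGaussian, smul_apply, neg_apply, sum_apply, Pi.neg_apply,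
    ContinuousLinearMap.proj_apply, smul_eq_mul, div_eq_mul_inv, mul_assoc, ← Finset.mul_sum,
    mul_inv]
  ring

lemma continuous_complexGaussian : Continuous (complexGaussian (n := n) a) := by
  unfold complexGaussian
  fun_prop

lemma continuous_complexGaussianDeriv : Continuous (complexGaussianDeriv (n := n) a) := by
  unfold complexGaussianDeriv
  have := continuous_complexGaussian (n := n) (a := a)
  fun_prop

lemma norm_complexGaussian_sub_le (ha : 0 < a) (z : Fin n → ℂ) (u : Fin n → ℝ) :
    ‖complexGaussian a (z - realToComplexPi n u)‖ ≤
      Real.exp ((∑ j, (z j).im ^ 2) / (4 * a)) := by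
  rw [complexGaussian, Complex.norm_exp, Real.exp_le_exp]
  have : (4 * (a : ℂ)) = ((4 * a : ℝ) : ℂ) := by push_cast; rfl
  rw [this, Complex.div_ofReal_re, Complex.neg_re, Complex.re_sum, ← Finset.sum_neg_distrib]
  gcongr with j
  simp only [pow_two, Complex.mul_re, Pi.sub_apply, realToComplexPi_apply, Complex.sub_re,
    Complex.sub_im, Complex.ofReal_re, Complex.ofReal_im]
  nlinarith [mul_self_nonneg ((z j).re - u j)]

lemma norm_complexGaussianDeriv_le (ha : 0 < a) (w : Fin n → ℂ) :
    ‖complexGaussianDeriv a w‖ ≤ ‖complexGaussian a w‖ / (2 * a) * (n * ‖w‖) := by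
  rw [complexGaussianDeriv, norm_smul]
  have : ‖-(complexGaussian a w) / (2 * (a : ℂ))‖ = ‖complexGaussian a w‖ / (2 * a) := by
    simp [abs_of_pos ha]
  rw [this]
  gcongr
  refine (norm_sum_le_of_le _ (f := fun j => _) (n := fun _ => ‖w‖) fun j _ => ?_).trans ?_
  · rw [norm_smul]
    have hproj : ‖(ContinuousLinearMap.proj j : (Fin n → ℂ) →L[ℂ] ℂ)‖ ≤ 1 :=
      ContinuousLinearMap.opNorm_le_bound _ zero_le_one fun v => by
        simpa using norm_le_pi_norm v j
    exact (mul_le_mul (norm_le_pi_norm w j) hproj (norm_nonneg _) (norm_nonneg _)).trans_eq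
      (mul_one _)
  · simp

/-- The entire extension of the convolution of `g` with the unnormalized Gaussian. -/
noncomputable def gaussianTransform (a : ℝ) (g : SchwartzMap (Fin n → ℝ) ℂ) (z : Fin n → ℂ) : ℂ :=
  ∫ u, g u * complexGaussian a (z - realToComplexPi n u)

lemma integrable_schwartz_mul_complexGaussian (ha : 0 < a) (g : SchwartzMap (Fin n → ℝ) ℂ)
    (z : Fin n → ℂ) :
    Integrable fun u => g u * complexGaussian a (z - realToComplexPi n u) := by
  refine g.integrable.mul_bdd ?_ (.of_forall fun u => norm_complexGaussian_sub_le ha z u)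
  exact (continuous_complexGaussian.comp (by fun_prop)).aestronglyMeasurable

lemma norm_gaussianTransform_le (ha : 0 < a) (g : SchwartzMap (Fin n → ℝ) ℂ) (z : Fin n → ℂ) :
    ‖gaussianTransform a g z‖ ≤ (∫ u, ‖g u‖) * Real.exp ((∑ j, (z j).im ^ 2) / (4 * a)) := by
  rw [← integral_mul_const]
  refine norm_integral_le_of_norm_le (g.integrable.norm.mul_const _) (.of_forall fun u => ?_)
  rw [norm_mul]
  gcongr
  exact norm_complexGaussian_sub_le ha z u

lemma differentiable_gaussianTransform (ha : 0 < a) (g : SchwartzMap (Fin n → ℝ) ℂ) :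
    Differentiable ℂ (gaussianTransform a g) := by
  intro z₀
  set R := ‖z₀‖ + 1 with hR
  set K := Real.exp ((∑ _j : Fin n, R ^ 2) / (4 * a)) / (2 * a) * n with hK
  have hK0 : 0 ≤ K := by positivity
  refine (hasFDerivAt_integral_of_dominated_of_fderiv_le (𝕜 := ℂ)
    (F' := fun z u => g u • complexGaussianDeriv a (z - realToComplexPi n u))
    (bound := fun u => K * R * ‖g u‖ + K * (‖u‖ ^ 1 * ‖g u‖))
    (Metric.ball_mem_nhds z₀ one_pos) (.of_forall fun z => ?_)
    (integrable_schwartz_mul_complexGaussian ha g z₀) ?_ (.of_forall fun u z hz => ?_) ?_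
    (.of_forall fun u z _ => ?_)).differentiableAt
  · exact (integrable_schwartz_mul_complexGaussian ha g z).aestronglyMeasurable
  · exact (g.continuous.smul
      (continuous_complexGaussianDeriv.comp (by fun_prop))).aestronglyMeasurable
  · have hzR : ‖z‖ ≤ R := by
      have h₁ : ‖z - z₀‖ < 1 := by simpa [dist_eq_norm] using hz
      have h₂ : ‖z‖ ≤ ‖z₀‖ + ‖z - z₀‖ := by simpa using norm_add_le z₀ (z - z₀)
      linarith
    have hw : ‖z - realToComplexPi n u‖ ≤ R + ‖u‖ :=
      (norm_sub_le _ _).trans (by rw [norm_realToComplexPi]; gcongr)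
    have hE : ‖complexGaussian a (z - realToComplexPi n u)‖ ≤
        Real.exp ((∑ _j : Fin n, R ^ 2) / (4 * a)) := by
      refine (norm_complexGaussian_sub_le ha z u).trans ?_
      gcongr Real.exp ((∑ j, ?_) / _) with j
      rw [← sq_abs]
      gcongr
      exact (Complex.abs_im_le_norm _).trans ((norm_le_pi_norm z j).trans hzR)
    calc ‖g u • complexGaussianDeriv a (z - realToComplexPi n u)‖
        ≤ ‖g u‖ * (Real.exp ((∑ _j : Fin n, R ^ 2) / (4 * a)) / (2 * a) * (n * (R + ‖u‖))) := by
          rw [norm_smul]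
          gcongr
          refine (norm_complexGaussianDeriv_le ha _).trans ?_
          gcongr
      _ = K * R * ‖g u‖ + K * (‖u‖ ^ 1 * ‖g u‖) := by rw [hK]; ring
  · exact (g.integrable.norm.const_mul _).add ((g.integrable_pow_mul volume 1).const_mul _)
  · exact ((hasFDerivAt_complexGaussian _).comp z ((hasFDerivAt_id z).sub_const _)).const_smul
      (g u)

open scoped LineDeriv in
/-- Multiplying `gaussianTransform a g` by the coordinate `zⱼ` amounts to applying
`uⱼ - 2a ∂ⱼ` to `g`. -/
lemma exists_coord_mul_gaussianTransform (ha : 0 < a) (g : SchwartzMap (Fin n → ℝ) ℂ)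
    (j : Fin n) :
    ∃ h : SchwartzMap (Fin n → ℝ) ℂ, ∀ z : Fin n → ℂ,
      z j * gaussianTransform a g z = gaussianTransform a h z := by
  set e : Fin n → ℝ := Pi.single j 1
  set p : SchwartzMap (Fin n → ℝ) ℂ := SchwartzMap.smulLeftCLM ℂ (fun u : Fin n → ℝ => u j) g
  have hp : ∀ u, p u = (u j : ℂ) * g u := fun u => by
    have ht : Function.HasTemperateGrowth (fun u : Fin n → ℝ => u j) :=
      (ContinuousLinearMap.proj (R := ℝ) (φ := fun _ : Fin n => ℝ) j).hasTemperateGrowth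
    simp [p, SchwartzMap.smulLeftCLM_apply_apply ht]
  have ha' : (a : ℂ) ≠ 0 := by exact_mod_cast ha.ne'
  refine ⟨p - (2 * a : ℂ) • ∂_{e} g, fun z => ?_⟩
  have hderiv : ∀ u, HasFDerivAt (fun u => complexGaussian a (z - realToComplexPi n u))
      (((complexGaussianDeriv a (z - realToComplexPi n u)).restrictScalars ℝ).comp
        (-(realToComplexPi n))) u := fun u =>
    ((hasFDerivAt_complexGaussian _).restrictScalars ℝ).comp u
      ((realToComplexPi n).hasFDerivAt.const_sub z)
  have hfderiv : ∀ u, fderiv ℝ (fun u => complexGaussian a (z - realToComplexPi n u)) u e =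
      (z j - u j) / (2 * a) * complexGaussian a (z - realToComplexPi n u) := fun u => by
    rw [(hderiv u).fderiv]
    have he : ∀ i, realToComplexPi n e i = if i = j then 1 else 0 := fun i => by
      by_cases h : i = j <;> simp [e, h]
    simp [complexGaussianDeriv, he]
    ring
  have I := integrable_schwartz_mul_complexGaussian (n := n) ha
  have hcoord : (fun u => g u * fderiv ℝ
        (fun u => complexGaussian a (z - realToComplexPi n u)) u e) = fun u =>
      z j / (2 * a) * (g u * complexGaussian a (z - realToComplexPi n u)) -
        1 / (2 * a) * (p u * complexGaussian a (z - realToComplexPi n u)) := by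
    ext u
    rw [hfderiv, hp]
    ring
  have hparts := integral_mul_fderiv_eq_neg_fderiv_mul_of_integrable (μ := volume)
    (f := g) (g := fun u => complexGaussian a (z - realToComplexPi n u)) (v := e)
    (I (∂_{e} g) z) (hcoord ▸ ((I g z).const_mul _).sub ((I p z).const_mul _)) (I g z)
    (fun u _ => g.differentiableAt) (fun u _ => (hderiv u).differentiableAt)
  rw [hcoord, integral_sub ((I g z).const_mul _) ((I p z).const_mul _), integral_const_mul,
    integral_const_mul] at hparts
  have hsub : gaussianTransform a (p - (2 * a : ℂ) • ∂_{e} g) z =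
      gaussianTransform a p z - 2 * a * gaussianTransform a (∂_{e} g) z := by
    simp only [gaussianTransform]
    rw [← integral_const_mul, ← integral_sub (I p z) ((I _ z).const_mul _)]
    congr 1 with u
    simp
    ring
  change z j / (2 * a) * gaussianTransform a g z - 1 / (2 * a) * gaussianTransform a p z =
    -gaussianTransform a (∂_{e} g) z at hparts
  rw [hsub]
  field_simp at hparts
  linear_combination hparts

lemma exists_pow_mul_norm_gaussianTransform_sq_le (ha : 0 < a) (m : ℕ)
    (g : SchwartzMap (Fin n → ℝ) ℂ) :
    ∃ C : ℝ, ∀ z : Fin n → ℂ,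
      (1 + ∑ j, ‖z j‖ ^ 2) ^ m * ‖gaussianTransform a g z‖ ^ 2 ≤
        C * Real.exp ((∑ j, (z j).im ^ 2) / (2 * a)) := by
  induction m generalizing g with
  | zero =>
    refine ⟨(∫ u, ‖g u‖) ^ 2, fun z => ?_⟩
    rw [pow_zero, one_mul]
    refine (pow_le_pow_left₀ (norm_nonneg _) (norm_gaussianTransform_le ha g z) 2).trans_eq ?_
    rw [mul_pow, ← Real.exp_nat_mul]
    congr 2
    push_cast
    field_simp
    ring
  | succ m ih =>
    choose h hh using exists_coord_mul_gaussianTransform ha g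
    obtain ⟨C₀, hC₀⟩ := ih g
    choose C hC using fun j => ih (h j)
    refine ⟨C₀ + ∑ j, C j, fun z => ?_⟩
    calc (1 + ∑ j, ‖z j‖ ^ 2) ^ (m + 1) * ‖gaussianTransform a g z‖ ^ 2
        = (1 + ∑ j, ‖z j‖ ^ 2) ^ m * ‖gaussianTransform a g z‖ ^ 2 +
          ∑ j, (1 + ∑ i, ‖z i‖ ^ 2) ^ m * ‖gaussianTransform a (h j) z‖ ^ 2 := by
          simp_rw [← hh, norm_mul, mul_pow, ← Finset.mul_sum, ← Finset.sum_mul]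
          ring
      _ ≤ _ := by
          rw [add_mul, Finset.sum_mul]
          exact add_le_add (hC₀ z) (Finset.sum_le_sum fun j _ => hC j z)

end ComplexGaussian

/-- Bargmann's pointwise estimate: if `g` is Schwartz on ℝⁿ and `f = g * p_a` (`a > 0`),
then `f` extends to an entire function `F` on ℂⁿ and for every `m` there is `C_m` with
`|F(x+iy)|² ≤ C_m (1+|x|²+|y|²)^{-m} (8πa)^{-n/2} e^{|y|²/(2a)}`. -/
theorem bargmann_estimate (n : ℕ) (a : ℝ) (ha : 0 < a)
    (g : SchwartzMap (Fin n → ℝ) ℂ) :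
    ∃ F : (Fin n → ℂ) → ℂ, Differentiable ℂ F ∧
      (∀ z : Fin n → ℂ, F z = ∫ u : Fin n → ℝ, g u *
        (((4 * π * a) ^ (-(n : ℝ) / 2) : ℝ) : ℂ) *
          Complex.exp (-(∑ j, (z j - (u j : ℂ)) ^ 2) / (4 * (a : ℂ)))) ∧
      ∀ m : ℕ, ∃ Cm : ℝ, ∀ x y : Fin n → ℝ,
        ‖F (fun j => (x j : ℂ) + (y j : ℂ) * Complex.I)‖ ^ 2 ≤
          Cm * (1 + ∑ j, x j ^ 2 + ∑ j, y j ^ 2) ^ (-(m : ℝ)) *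
            ((8 * π * a) ^ (-(n : ℝ) / 2) * Real.exp ((∑ j, y j ^ 2) / (2 * a))) := by
  set c : ℝ := (4 * π * a) ^ (-(n : ℝ) / 2)
  refine ⟨fun z => c * gaussianTransform a g z,
    (differentiable_gaussianTransform ha g).const_mul _, fun z => ?_, fun m => ?_⟩
  · change (c : ℂ) * ∫ u, _ = _
    rw [← integral_const_mul]
    congr 1 with u
    simp only [complexGaussian, Pi.sub_apply, realToComplexPi_apply]
    ring
  · obtain ⟨C, hC⟩ := exists_pow_mul_norm_gaussianTransform_sq_le ha m g
    set d : ℝ := (8 * π * a) ^ (-(n : ℝ) / 2)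
    have hd : 0 < d := by positivity
    refine ⟨c ^ 2 * C / d, fun x y => ?_⟩
    have hz : ∀ j, ‖(x j : ℂ) + y j * Complex.I‖ ^ 2 = x j ^ 2 + y j ^ 2 := fun j => by
      rw [Complex.sq_norm, Complex.normSq_add_mul_I]
    have h := hC fun j => x j + y j * Complex.I
    simp only [hz, Finset.sum_add_distrib, ← add_assoc, Complex.add_im, Complex.ofReal_im,
      Complex.im_ofReal_mul, Complex.I_im, mul_one, zero_add] at h
    set S : ℝ := 1 + ∑ j, x j ^ 2 + ∑ j, y j ^ 2
    have hS : 0 < S := by positivity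
    rw [Real.rpow_neg hS.le, Real.rpow_natCast, norm_mul, mul_pow, Complex.norm_real,
      Real.norm_eq_abs, sq_abs]
    rw [← le_div_iff₀' (by positivity)] at h
    calc _ ≤ c ^ 2 * _ := mul_le_mul_of_nonneg_left h (sq_nonneg c)
      _ = _ := by field_simp
end
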